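/- arXiv:2505.20621 — 3 statements merged into one kernel-verified Lean document; each statement's English description precedes it below -/
import Mathlib

section
/- Let b > 0, ε ≥ 0, δ ≥ 0, and let μ and ν be Borel probability measures on ℝ, both supported on the interval [0, b]. If ν satisfies the (ε, δ)-ADP outcomes guarantee relative to μ, then ∫ x dμ(x) ≥ e^{−ε} · ((∫ x dν(x)) − b·δ). -/
open MeasureTheory

lemma adp_aux (b : ℝ) (hb : 0 < b) (μ : Measure ℝ) [IsProbabilityMeasure μ]
    (h : μ (Set.Icc 0 b) = 1) :
    ∫ x, x ∂μ = ∫ t in Set.Ioc 0 b, μ.real {a : ℝ | t ≤ a} := by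
  have hae : ∀ᵐ x ∂μ, x ∈ Set.Icc 0 b := by
    rw [← prob_compl_eq_zero_iff measurableSet_Icc] at h
    exact h
  have hint : Integrable (fun x : ℝ => x) μ := by
    refine Integrable.of_bound (by fun_prop) b ?_
    filter_upwards [hae] with x hx
    rw [Real.norm_eq_abs, abs_of_nonneg hx.1]
    exact hx.2
  refine hint.integral_eq_integral_Ioc_meas_le ?_ ?_
  · filter_upwards [hae] with x hx using hx.1
  · filter_upwards [hae] with x hx using hx.2

lemma adp_aux2 (b : ℝ) (μ : Measure ℝ) [IsProbabilityMeasure μ] :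
    IntegrableOn (fun t => μ.real {a : ℝ | t ≤ a}) (Set.Ioc 0 b) := by
  have : Antitone (fun t => μ.real {a : ℝ | t ≤ a}) := by
    intro s t hst
    exact measureReal_mono (fun a (ha : t ≤ a) => hst.trans ha)
  exact ((this.antitoneOn _).integrableOn_isCompact isCompact_Icc).mono_set Set.Ioc_subset_Icc_self

theorem adp_expected_outcomes_lower
    (b ε δ : ℝ) (hb : 0 < b) (hε : 0 ≤ ε) (hδ : 0 ≤ δ)
    (μ ν : Measure ℝ) [IsProbabilityMeasure μ] [IsProbabilityMeasure ν]
    (hμsupp : μ (Set.Icc 0 b) = 1) (hνsupp : ν (Set.Icc 0 b) = 1)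
    (hADP : ∀ S : Set ℝ, MeasurableSet S →
      (ν S).toReal ≤ Real.exp ε * (μ S).toReal + δ) :
    ∫ x, x ∂μ ≥ Real.exp (-ε) * ((∫ x, x ∂ν) - b * δ) := by
  have hc : IntegrableOn (fun _ : ℝ => δ) (Set.Ioc 0 b) := by simp
  have h1 : ∫ x, x ∂ν ≤ Real.exp ε * (∫ x, x ∂μ) + b * δ := by
    rw [adp_aux b hb μ hμsupp, adp_aux b hb ν hνsupp]
    calc _ ≤ ∫ t in Set.Ioc 0 b, (Real.exp ε * μ.real {a : ℝ | t ≤ a} + δ) := by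
          refine integral_mono (adp_aux2 b ν) (((adp_aux2 b μ).const_mul _).add hc) ?_
          intro t
          exact hADP _ measurableSet_Ici
      _ = _ := by
          rw [integral_add ((adp_aux2 b μ).const_mul _) hc, integral_const_mul]
          simp [hb.le]
  have h2 : Real.exp (-ε) * ((∫ x, x ∂ν) - b * δ) ≤
      Real.exp (-ε) * (Real.exp ε * (∫ x, x ∂μ)) :=
    mul_le_mul_of_nonneg_left (by linarith) (Real.exp_pos _).le
  rw [← mul_assoc, ← Real.exp_add, neg_add_cancel, Real.exp_zero, one_mul] at h2
  exact h2
end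

section
/- Let a < 0 < b be real numbers, ε ≥ 0, δ ≥ 0, and let μ and ν be Borel probability measures on ℝ, both supported on the interval [a, b]. Suppose both μ(S) ≤ e^ε · ν(S) + δ and ν(S) ≤ e^ε · μ(S) + δ hold for every Borel set S ⊆ ℝ. Write E_ν⁺ = ∫ max(x, 0) dν(x) and E_ν⁻ = ∫ max(−x, 0) dν(x). Then ∫ x dμ(x) ≤ e^ε · E_ν⁺ + b·δ − e^{−ε} · (E_ν⁻ + a·δ). (Real-valued expected outcomes guarantee, ADP upper bound.) -/
open MeasureTheory

lemma adp_aux_s13 (M C δ : ℝ) (hM : 0 ≤ M) 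
    (μ ν : Measure ℝ) [IsProbabilityMeasure μ] [IsProbabilityMeasure ν]
    (f : ℝ → ℝ) (hf : Measurable f) (h0 : ∀ x, 0 ≤ f x)
    (hμ : ∀ᵐ x ∂μ, f x ≤ M) (hν : ∀ᵐ x ∂ν, f x ≤ M)
    (h₁ : ∀ S : Set ℝ, MeasurableSet S →
      (μ S).toReal ≤ C * (ν S).toReal + δ) :
    ∫ x, f x ∂μ ≤ C * (∫ x, f x ∂ν) + M * δ := by
  have hi : ∀ (ρ : Measure ℝ) [IsProbabilityMeasure ρ], (∀ᵐ x ∂ρ, f x ≤ M) → Integrable f ρ := by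
    intro ρ _ h
    refine Integrable.of_bound hf.aestronglyMeasurable M ?_
    filter_upwards [h] with x hx
    rwa [Real.norm_of_nonneg (h0 x)]
  have hint : ∀ (ρ : Measure ℝ) [IsProbabilityMeasure ρ],
      IntegrableOn (fun t => ρ.real {x | t ≤ f x}) (Set.Ioc 0 M) := by
    intro ρ _
    have hanti : Antitone (fun t => ρ.real {x | t ≤ f x}) := by
      intro s t hst
      exact measureReal_mono (fun x hx => le_trans hst hx)
    exact (hanti.locallyIntegrable.integrableOn_isCompact isCompact_Icc).mono_set
      Set.Ioc_subset_Icc_self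
  rw [(hi μ hμ).integral_eq_integral_Ioc_meas_le (Filter.Eventually.of_forall h0) hμ,
    (hi ν hν).integral_eq_integral_Ioc_meas_le (Filter.Eventually.of_forall h0) hν]
  have hc : ∫ t in Set.Ioc 0 M, δ = M * δ := by simp [hM]
  have hic : IntegrableOn (fun _ : ℝ => δ) (Set.Ioc 0 M) := by
    exact integrableOn_const (by simp)
  rw [← hc, ← integral_const_mul, ← integral_add ((hint ν).const_mul C) hic]
  refine integral_mono (hint μ) (((hint ν).const_mul C).add hic) ?_
  intro t
  exact h₁ _ (measurableSet_le measurable_const hf)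

theorem adp_real_valued_expected_outcomes_upper
    (a b ε δ : ℝ) (ha : a < 0) (hb : 0 < b) (hε : 0 ≤ ε) (hδ : 0 ≤ δ)
    (μ ν : Measure ℝ) [IsProbabilityMeasure μ] [IsProbabilityMeasure ν]
    (hμsupp : μ (Set.Icc a b) = 1) (hνsupp : ν (Set.Icc a b) = 1)
    (h₁ : ∀ S : Set ℝ, MeasurableSet S →
      (μ S).toReal ≤ Real.exp ε * (ν S).toReal + δ)
    (h₂ : ∀ S : Set ℝ, MeasurableSet S →
      (ν S).toReal ≤ Real.exp ε * (μ S).toReal + δ) :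
    ∫ x, x ∂μ ≤
      Real.exp ε * (∫ x, max x 0 ∂ν) + b * δ
        - Real.exp (-ε) * ((∫ x, max (-x) 0 ∂ν) + a * δ) := by
  have hμ : ∀ᵐ x ∂μ, x ∈ Set.Icc a b := (mem_ae_iff_prob_eq_one measurableSet_Icc).2 hμsupp
  have hν : ∀ᵐ x ∂ν, x ∈ Set.Icc a b := (mem_ae_iff_prob_eq_one measurableSet_Icc).2 hνsupp
  have A := adp_aux_s13 b (Real.exp ε) δ hb.le μ ν (fun x => max x 0) (by fun_prop)
    (fun x => le_max_right _ _) (hμ.mono fun x hx => max_le hx.2 hb.le)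
    (hν.mono fun x hx => max_le hx.2 hb.le) h₁
  have B := adp_aux_s13 (-a) (Real.exp ε) δ (by linarith) ν μ (fun x => max (-x) 0) (by fun_prop)
    (fun x => le_max_right _ _) (hν.mono fun x hx => max_le (neg_le_neg hx.1) (by linarith))
    (hμ.mono fun x hx => max_le (neg_le_neg hx.1) (by linarith)) h₂
  have hid : Integrable (fun x : ℝ => x) μ := by
    refine Integrable.of_bound (by fun_prop) (max (-a) b) ?_
    filter_upwards [hμ] with x hx
    rw [Real.norm_eq_abs, abs_le]
    exact ⟨by linarith [hx.1, le_max_left (-a) b], hx.2.trans (le_max_right _ _)⟩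
  have E : ∫ x, x ∂μ = ∫ x, max x 0 ∂μ - ∫ x, max (-x) 0 ∂μ := by
    rw [← integral_sub hid.pos_part hid.neg_part]
    refine integral_congr_ae (Filter.Eventually.of_forall fun x => ?_)
    rcases le_total x 0 with h | h <;> simp [h]
  have D : Real.exp (-ε) * ((∫ x, max (-x) 0 ∂ν) + a * δ) ≤ ∫ x, max (-x) 0 ∂μ := by
    rw [Real.exp_neg, inv_mul_le_iff₀ (Real.exp_pos ε)]
    linarith
  linarith
end

section
/- Let a < 0 < b be real numbers, ε ≥ 0, α > 1, and let μ and ν be Borel probability measures on ℝ, both supported on the interval [a, b]. Suppose both μ(S) ≤ (e^ε · ν(S))^{(α−1)/α} and ν(S) ≤ (e^ε · μ(S))^{(α−1)/α} hold for every Borel set S ⊆ ℝ. Write E_ν⁺ = ∫ max(x, 0) dν(x) and E_ν⁻ = ∫ max(−x, 0) dν(x). Then ∫ x dμ(x) ≤ b^{1/α} · (e^ε · E_ν⁺)^{(α−1)/α} − e^{−ε} · ((−a)^{−1/α} · E_ν⁻)^{α/(α−1)}. (Real-valued expected outcomes guarantee, RDP upper bound.) -/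
open MeasureTheory

lemma rdp_aux (M c p : ℝ) (hM : 0 < M) (hc : 0 ≤ c) (hp0 : 0 < p) (hp1 : p ≤ 1)
    (μ ν : Measure ℝ) [IsProbabilityMeasure μ] [IsProbabilityMeasure ν]
    (h : ∀ S : Set ℝ, MeasurableSet S → (μ S).toReal ≤ (c * (ν S).toReal) ^ p)
    (f : ℝ → ℝ) (hf : Measurable f) (h0 : ∀ x, 0 ≤ f x)
    (hμ : ∀ᵐ x ∂μ, f x ≤ M) (hν : ∀ᵐ x ∂ν, f x ≤ M) :
    ∫ x, f x ∂μ ≤ M ^ (1 - p) * (c * ∫ x, f x ∂ν) ^ p := by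
  have hint : ∀ (ρ : Measure ℝ) [IsProbabilityMeasure ρ], (∀ᵐ x ∂ρ, f x ≤ M) →
      Integrable f ρ := by
    intro ρ _ hρ
    refine Integrable.of_bound hf.aestronglyMeasurable M ?_
    filter_upwards [hρ] with x hx
    rwa [Real.norm_of_nonneg (h0 x)]
  have hanti : ∀ (ρ : Measure ℝ) [IsProbabilityMeasure ρ],
      Antitone (fun t : ℝ => ρ.real {x | t ≤ f x}) := by
    intro ρ _ s t hst
    exact measureReal_mono (fun x hx => le_trans hst hx)
  have e1 := (hint μ hμ).integral_eq_integral_Ioc_meas_le (Filter.Eventually.of_forall h0) hμ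
  have e2 := (hint ν hν).integral_eq_integral_Ioc_meas_le (Filter.Eventually.of_forall h0) hν
  have i1 : IntegrableOn (fun t : ℝ => μ.real {x | t ≤ f x}) (Set.Ioc 0 M) := by
    refine Integrable.of_bound (hanti μ).measurable.aestronglyMeasurable 1 ?_
    refine Filter.Eventually.of_forall fun t => ?_
    rw [Real.norm_of_nonneg measureReal_nonneg]
    exact measureReal_le_one
  have i2 : IntegrableOn (fun t : ℝ => c * ν.real {x | t ≤ f x}) (Set.Ioc 0 M) := by
    refine Integrable.of_bound
      ((hanti ν).measurable.const_mul c).aestronglyMeasurable c ?_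
    refine Filter.Eventually.of_forall fun t => ?_
    rw [Real.norm_of_nonneg (mul_nonneg hc measureReal_nonneg)]
    exact mul_le_of_le_one_right hc measureReal_le_one
  have i3 : IntegrableOn (fun t : ℝ => (c * ν.real {x | t ≤ f x}) ^ p) (Set.Ioc 0 M) := by
    refine Integrable.of_bound
      (((hanti ν).measurable.const_mul c).pow_const p).aestronglyMeasurable (c ^ p) ?_
    refine Filter.Eventually.of_forall fun t => ?_
    have hn : 0 ≤ c * ν.real {x | t ≤ f x} := mul_nonneg hc measureReal_nonneg
    rw [Real.norm_of_nonneg (Real.rpow_nonneg hn p)]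
    exact Real.rpow_le_rpow hn (mul_le_of_le_one_right hc measureReal_le_one) hp0.le
  have hle : ∫ x, f x ∂μ ≤ ∫ t in Set.Ioc 0 M, (c * ν.real {x | t ≤ f x}) ^ p := by
    rw [e1]
    exact integral_mono i1 i3 fun t => h _ (measurableSet_le measurable_const hf)
  have hJ := (Real.concaveOn_rpow hp0.le hp1).le_map_set_average
    (μ := volume) (t := Set.Ioc 0 M)
    (f := fun t : ℝ => c * ν.real {x | t ≤ f x})
    (Real.continuous_rpow_const hp0.le).continuousOn isClosed_Ici
    (by simp [hM]) (by simp)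
    (Filter.Eventually.of_forall fun t => mul_nonneg hc measureReal_nonneg) i2 i3
  rw [setAverage_eq, setAverage_eq, integral_const_mul, ← e2] at hJ
  have hv : volume.real (Set.Ioc 0 M) = M := by simp [hM.le]
  rw [hv, smul_eq_mul, smul_eq_mul] at hJ
  have hI : 0 ≤ c * ∫ x, f x ∂ν := mul_nonneg hc (integral_nonneg h0)
  rw [Real.mul_rpow (inv_nonneg.2 hM.le) hI, Real.inv_rpow hM.le] at hJ
  refine hle.trans ?_
  rw [inv_mul_le_iff₀ hM] at hJ
  refine hJ.trans (le_of_eq ?_)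
  rw [Real.rpow_sub hM, Real.rpow_one]
  ring

theorem rdp_real_valued_expected_outcomes_upper
    (a b ε α : ℝ) (ha : a < 0) (hb : 0 < b) (hε : 0 ≤ ε) (hα : 1 < α)
    (μ ν : Measure ℝ) [IsProbabilityMeasure μ] [IsProbabilityMeasure ν]
    (hμsupp : μ (Set.Icc a b) = 1) (hνsupp : ν (Set.Icc a b) = 1)
    (h₁ : ∀ S : Set ℝ, MeasurableSet S →
      (μ S).toReal ≤ (Real.exp ε * (ν S).toReal) ^ ((α - 1) / α))
    (h₂ : ∀ S : Set ℝ, MeasurableSet S →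
      (ν S).toReal ≤ (Real.exp ε * (μ S).toReal) ^ ((α - 1) / α)) :
    ∫ x, x ∂μ ≤
      b ^ (1 / α) * (Real.exp ε * ∫ x, max x 0 ∂ν) ^ ((α - 1) / α)
        - Real.exp (-ε) * ((-a) ^ (-1 / α) * ∫ x, max (-x) 0 ∂ν) ^ (α / (α - 1)) := by
  have hα0 : 0 < α := by linarith
  have hα1 : 0 < α - 1 := by linarith
  have hna : 0 < -a := by linarith
  have hp0 : 0 < (α - 1) / α := by positivity
  have hp1 : (α - 1) / α ≤ 1 := by rw [div_le_one hα0]; linarith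
  have hsub : 1 - (α - 1) / α = 1 / α := by field_simp; ring
  have aeI : ∀ (ρ : Measure ℝ) [IsProbabilityMeasure ρ], ρ (Set.Icc a b) = 1 →
      ∀ᵐ x ∂ρ, x ∈ Set.Icc a b := fun ρ _ h =>
    (mem_ae_iff_prob_eq_one measurableSet_Icc).2 h
  have hμ := aeI μ hμsupp
  have hν := aeI ν hνsupp
  have P : ∀ x, x ∈ Set.Icc a b → max x 0 ≤ b := fun x hx => max_le hx.2 hb.le
  have N : ∀ x, x ∈ Set.Icc a b → max (-x) 0 ≤ -a :=
    fun x hx => max_le (neg_le_neg hx.1) hna.le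
  have mP : Measurable fun x : ℝ => max x 0 := by fun_prop
  have mN : Measurable fun x : ℝ => max (-x) 0 := by fun_prop
  have A := rdp_aux b (Real.exp ε) _ hb (Real.exp_pos ε).le hp0 hp1 μ ν h₁
    (fun x => max x 0) mP (fun x => le_max_right _ _) (hμ.mono P) (hν.mono P)
  have B := rdp_aux (-a) (Real.exp ε) _ hna (Real.exp_pos ε).le hp0 hp1 ν μ h₂
    (fun x => max (-x) 0) mN (fun x => le_max_right _ _) (hν.mono N) (hμ.mono N)
  rw [hsub] at A B
  have iP : Integrable (fun x : ℝ => max x 0) μ := by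
    refine Integrable.of_bound mP.aestronglyMeasurable b ?_
    filter_upwards [hμ] with x hx
    rw [Real.norm_of_nonneg (le_max_right _ _)]; exact P x hx
  have iN : Integrable (fun x : ℝ => max (-x) 0) μ := by
    refine Integrable.of_bound mN.aestronglyMeasurable (-a) ?_
    filter_upwards [hμ] with x hx
    rw [Real.norm_of_nonneg (le_max_right _ _)]; exact N x hx
  have split : ∫ x, x ∂μ = ∫ x, max x 0 ∂μ - ∫ x, max (-x) 0 ∂μ := by
    rw [← integral_sub iP iN]
    congr 1; ext x
    rcases le_total 0 x with hx | hx
    · rw [max_eq_left hx, max_eq_right (by linarith)]; ring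
    · rw [max_eq_right hx, max_eq_left (by linarith)]; ring
  have hEμ : 0 ≤ ∫ x, max (-x) 0 ∂μ := integral_nonneg fun x => le_max_right _ _
  have hEν : 0 ≤ ∫ x, max (-x) 0 ∂ν := integral_nonneg fun x => le_max_right _ _
  have hI : 0 ≤ Real.exp ε * ∫ x, max (-x) 0 ∂μ := mul_nonneg (Real.exp_pos ε).le hEμ
  have C : (-a) ^ (-1 / α) * ∫ x, max (-x) 0 ∂ν ≤
      (Real.exp ε * ∫ x, max (-x) 0 ∂μ) ^ ((α - 1) / α) := by
    rw [neg_div, Real.rpow_neg hna.le, inv_mul_le_iff₀ (Real.rpow_pos_of_pos hna _)]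
    exact B
  have D := Real.rpow_le_rpow (mul_nonneg (Real.rpow_nonneg hna.le _) hEν) C
    (show 0 ≤ α / (α - 1) by positivity)
  rw [← Real.rpow_mul hI, show (α - 1) / α * (α / (α - 1)) = 1 by field_simp,
    Real.rpow_one] at D
  have E := mul_le_mul_of_nonneg_left D (Real.exp_pos (-ε)).le
  rw [← mul_assoc, ← Real.exp_add, neg_add_cancel, Real.exp_zero, one_mul] at E
  rw [split]
  exact sub_le_sub A E
end
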